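/- Let f_c ≥ 10 be an integer, n = 2f_c+1, λ_c = 1/f_c, c = 0.1649, and suppose Δ(T) ≥ 2λ_c. Let C₁ and C₂ be the numerical constants from the main support-detection theorem (properties (i) and (ii)). Then for any element t_i in the support T of x with |a_i| > C₁ δ, every solution x̂ of the total-variation minimization program contains an element t̂_i in its support T̂ satisfying |t_i − t̂_i| ≤ sqrt( C₂ δ / (|a_i| − C₁ δ) ) · λ_c. -/

import Mathlib

open Finset

noncomputable section

/-- Wraparound (circle) distance between two real representatives of points on
the circle `𝕋 = ℝ/ℤ` obtained by identifying the endpoints of `[0,1]`. -/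
def cdist (s t : ℝ) : ℝ := ‖((s - t : ℝ) : AddCircle (1 : ℝ))‖

/-- `Δ(T) ≥ d`: the minimum separation condition for the finite set `T ⊂ 𝕋`. -/
def HasMinSep (T : Finset ℝ) (d : ℝ) : Prop :=
  ∀ s ∈ T, ∀ t ∈ T, s ≠ t → d ≤ cdist s t

/-- The complex exponential `e^{i 2 π k t}`. -/
def efun (k : ℤ) (t : ℝ) : ℂ :=
  Complex.exp (2 * (Real.pi : ℂ) * Complex.I * (k : ℂ) * (t : ℂ))

/-- The measurement map `F_n`: the `k`-th Fourier coefficient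
`∫ e^{-i 2 π k t} μ(dt)` of the finite atomic complex measure `μ = ∑_{t ∈ S} a t δ_t`. -/
def Fmeas (fc : ℕ) (S : Finset ℝ) (a : ℝ → ℂ) (k : ℤ) : ℂ :=
  ∑ t ∈ S, a t * efun (-k) t

/-- The `ℓ₂` norm of a vector in `ℂ^n`, `n = 2 f_c + 1`, indexed by `k ∈ {-f_c, …, f_c}`. -/
def l2norm (fc : ℕ) (v : ℤ → ℂ) : ℝ :=
  Real.sqrt (∑ k ∈ Finset.Icc (-(fc : ℤ)) (fc : ℤ), ‖v k‖ ^ 2)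

/-- Total-variation norm of the finite atomic complex measure `∑_{t ∈ S} a t δ_t`. -/
def tvnorm (S : Finset ℝ) (a : ℝ → ℂ) : ℝ := ∑ t ∈ S, ‖a t‖

/-- Feasibility for the data constraint: `‖F_n x̃ - y‖₂ ≤ δ`. -/
def Feasible (fc : ℕ) (δ : ℝ) (y : ℤ → ℂ) (S : Finset ℝ) (a : ℝ → ℂ) : Prop :=
  l2norm fc (fun k => Fmeas fc S a k - y k) ≤ δ

/-- `∑_{t ∈ Sh} ah t δ_t` is a solution of the TV-norm minimization program:
it is supported on `[0,1)`, feasible, and its TV norm is at most that of any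
feasible finite (atomic) complex measure supported on `[0,1)`. -/
def IsSolution (fc : ℕ) (δ : ℝ) (y : ℤ → ℂ) (Sh : Finset ℝ) (ah : ℝ → ℂ) : Prop :=
  ↑Sh ⊆ Set.Ico (0 : ℝ) 1 ∧ Feasible fc δ y Sh ah ∧
    ∀ (S' : Finset ℝ) (a' : ℝ → ℂ), ↑S' ⊆ Set.Ico (0 : ℝ) 1 →
      Feasible fc δ y S' a' → tvnorm Sh ah ≤ tvnorm S' a'

/-- The trigonometric (low-pass) polynomial `t ↦ ∑_{k=-f_c}^{f_c} b_k e^{i 2 π k t}`. -/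
def trigPoly (fc : ℕ) (b : ℤ → ℂ) (t : ℝ) : ℂ :=
  ∑ k ∈ Finset.Icc (-(fc : ℤ)) (fc : ℤ), b k * efun k t

/-- Corollary 1.2: let `C₁, C₂ > 0` be constants for which properties (i)
and (ii) of the main support-detection theorem hold. Then for any `t_i ∈ T` with
`|a_i| > C₁ δ`, the support of any solution `x̂` contains a point `th_i` with
`|t_i - th_i| ≤ √(C₂ δ / (|a_i| - C₁ δ)) λ_c`. -/
theorem support_detection_corollary
    (C₁ C₂ : ℝ) (hC₁ : 0 < C₁) (hC₂ : 0 < C₂)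
    (fc : ℕ) (hfc : 10 ≤ fc)
    (T : Finset ℝ) (a : ℝ → ℂ) (hT : ↑T ⊆ Set.Ico (0 : ℝ) 1)
    (hsep : HasMinSep T (2 * (1 / (fc : ℝ))))
    (z : ℤ → ℂ) (δ : ℝ) (hδ : 0 ≤ δ) (hz : l2norm fc z ≤ δ)
    (Sh : Finset ℝ) (ah : ℝ → ℂ)
    (hsol : IsSolution fc δ (fun k => Fmeas fc T a k + z k) Sh ah)
    -- property (i) of the main theorem, with constant C₁ :
    (hprop1 : ∀ t_j ∈ T,
      ‖a t_j - ∑ t ∈ Sh.filter fun t => cdist t t_j ≤ 0.1649 * (1 / (fc : ℝ)), ah t‖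
        ≤ C₁ * δ)
    -- property (ii) of the main theorem, with constant C₂ :
    (hprop2 : ∑ t ∈ Sh, ∑ t_j ∈ T.filter fun t_j => cdist t t_j ≤ 0.1649 * (1 / (fc : ℝ)),
        ‖ah t‖ * (cdist t t_j) ^ 2 ≤ C₂ * (1 / (fc : ℝ)) ^ 2 * δ)
    (t_i : ℝ) (hti : t_i ∈ T) (hamp : C₁ * δ < ‖a t_i‖) :
    ∃ th_i ∈ Sh,
      cdist t_i th_i ≤ Real.sqrt (C₂ * δ / (‖a t_i‖ - C₁ * δ)) * (1 / (fc : ℝ)) := by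
  by_contra hcon
  push Not at hcon
  have hf : (0 : ℝ) < 1 / (fc : ℝ) := by
    have : (0 : ℝ) < fc := by exact_mod_cast (by omega : 0 < fc)
    positivity
  have hsymm : ∀ s t : ℝ, cdist s t = cdist t s := by
    intro s t
    unfold cdist
    rw [← neg_sub t s, AddCircle.coe_neg, norm_neg]
  set g : ℝ := ‖a t_i‖ - C₁ * δ with hg
  have hg0 : 0 < g := by rw [hg]; linarith
  set R : ℝ := Real.sqrt (C₂ * δ / g) * (1 / (fc : ℝ)) with hR
  have hR0 : 0 ≤ R := by positivity
  have hR2 : R ^ 2 * g = C₂ * (1 / (fc : ℝ)) ^ 2 * δ := by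
    rw [hR, mul_pow, Real.sq_sqrt (by positivity)]
    field_simp
  set A := Sh.filter fun t => cdist t t_i ≤ 0.1649 * (1 / (fc : ℝ)) with hA
  have hsum : g ≤ ∑ t ∈ A, ‖ah t‖ := by
    have h1 : ‖a t_i - ∑ t ∈ A, ah t‖ ≤ C₁ * δ := hprop1 t_i hti
    have h2 := norm_sub_norm_le (a t_i) (∑ t ∈ A, ah t)
    have h3 := norm_sum_le A ah
    rw [hg]; linarith
  have hle : ∑ t ∈ A, ‖ah t‖ * (cdist t t_i) ^ 2 ≤ C₂ * (1 / (fc : ℝ)) ^ 2 * δ := by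
    refine le_trans ?_ hprop2
    rw [hA, Finset.sum_filter]
    refine Finset.sum_le_sum fun t _ => ?_
    split_ifs with h
    · exact Finset.single_le_sum (f := fun t_j => ‖ah t‖ * (cdist t t_j) ^ 2)
        (fun _ _ => by positivity) (Finset.mem_filter.2 ⟨hti, h⟩)
    · exact Finset.sum_nonneg fun _ _ => by positivity
  have hsq : ∀ t ∈ A, R ^ 2 < (cdist t t_i) ^ 2 := by
    intro t ht
    have := hcon t (Finset.mem_filter.1 ht).1
    rw [hsymm] at this
    exact pow_lt_pow_left₀ this hR0 two_ne_zero
  obtain ⟨t₀, ht₀, hpos⟩ : ∃ t ∈ A, 0 < ‖ah t‖ := by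
    by_contra hno
    push Not at hno
    have := Finset.sum_nonpos hno
    linarith
  have hlt : ∑ t ∈ A, ‖ah t‖ * R ^ 2 < ∑ t ∈ A, ‖ah t‖ * (cdist t t_i) ^ 2 :=
    Finset.sum_lt_sum
      (fun t ht => mul_le_mul_of_nonneg_left (hsq t ht).le (norm_nonneg _))
      ⟨t₀, ht₀, mul_lt_mul_of_pos_left (hsq t₀ ht₀) hpos⟩
  rw [← Finset.sum_mul] at hlt
  have := mul_le_mul_of_nonneg_right hsum (sq_nonneg R)
  linarith
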